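/- Let d ≥ 2 be an integer, let μ be the normalized Haar probability measure on U(d), and let Γ(X) = Σ_{i=1}^r K_i X K_iᴴ be a Kraus channel on d×d matrices (so Σ_i K_iᴴ K_i = I). Set q = (Σ_{i=1}^r |tr(K_i)|² − 1)/(d² − 1). Let P be an orthogonal projection on ℂ^d of rank s, and let ρ be a density matrix supported inside the range of P (i.e. P ρ P = ρ). Then the Haar-averaged acceptance probability satisfies ∫_{U(d)} tr( P · Uᴴ Γ(U ρ Uᴴ) U ) dμ(U) = q + (1 − q)·s/d. (Exact Haar-average of the tag-verification acceptance probability P₀ in the PQAS authentication theorem.) -/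

import Mathlib

open MeasureTheory Matrix
open scoped ComplexOrder

attribute [local instance] Matrix.normedAddCommGroup Matrix.normedSpace

noncomputable instance {n : Type*} [Fintype n] [DecidableEq n] :
    MeasurableSpace (Matrix.unitaryGroup n ℂ) := borel _

instance {n : Type*} [Fintype n] [DecidableEq n] :
    BorelSpace (Matrix.unitaryGroup n ℂ) := ⟨rfl⟩

/-!
Averaging the conjugates `X ↦ Uᴴ Φ(U X Uᴴ) U` of a linear map `Φ` over the unitary group gives its
twirl, which commutes with conjugation by every unitary because Haar measure on a compact group is
right invariant. A linear map `T` with this property has the form `X ↦ a X + b tr(X) 1`: by the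
spectral theorem it is determined by its values on the diagonal matrix units `E_kk`; commuting with
diagonal sign changes makes `T E_kk` diagonal, and commuting with permutation matrices makes its
diagonal entries other than the `k`-th all equal.

Twirling preserves both the trace of `Φ` as an operator and `tr Φ(1)`, and these two numbers
determine `a` and `b`. For `Φ(X) = ∑ᵢ Kᵢ X Kᵢᴴ` with `∑ᵢ Kᵢᴴ Kᵢ = 1` they are `∑ᵢ |tr Kᵢ|²` and `d`,
so that `a = q` and `b = (1 - q) / d`; applying the twirl to `ρ` and pairing the result with `P`
gives the formula.
-/

theorem isMulRightInvariant_of_isProbabilityMeasure {G : Type*} [Group G] [TopologicalSpace G]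
    [IsTopologicalGroup G] [LocallyCompactSpace G] [MeasurableSpace G] [BorelSpace G]
    (μ : Measure G) [μ.IsHaarMeasure] [IsProbabilityMeasure μ] : μ.IsMulRightInvariant where
  map_mul_right_eq_self g :=
    have := Measure.isProbabilityMeasure_map (μ := μ) (measurable_mul_const g).aemeasurable
    Measure.isHaarMeasure_eq_of_isProbabilityMeasure (μ.map (· * g)) μ

section Trace

variable {n R : Type*} [Fintype n] [CommRing R]

theorem linearMap_trace_eq_sum_single [DecidableEq n] (T : Module.End R (Matrix n n R)) :
    LinearMap.trace R _ T = ∑ i, ∑ j, T (single i j 1) i j := by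
  rw [LinearMap.trace_eq_matrix_trace R (Matrix.stdBasis R n n), Matrix.trace,
    Fintype.sum_prod_type]
  simp only [diag_apply, LinearMap.toMatrix_apply, stdBasis_eq_single]
  rfl

theorem linearMap_trace_mulLeftRight (A B : Matrix n n R) :
    LinearMap.trace R _ (LinearMap.mulLeftRight R (A, B)) = A.trace * B.trace := by
  classical
  have hentry (i j : n) : (A * single i j (1 : R) * B) i j = A i i * B j j := by
    simp [single_eq_single_vecMulVec_single, mul_vecMulVec, vecMulVec_mul, vecMulVec_apply]
  simp only [linearMap_trace_eq_sum_single, LinearMap.mulLeftRight_apply, hentry, Matrix.trace,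
    diag_apply, Finset.sum_mul_sum]

end Trace

section Twirl

variable {n : Type*} [Fintype n] [DecidableEq n]

instance compactSpace_unitaryGroup {𝕜 : Type*} [RCLike 𝕜] : CompactSpace (unitaryGroup n 𝕜) := by
  have hclosed : IsClosed (unitaryGroup n 𝕜 : Set (Matrix n n 𝕜)) := isClosed_unitary
  have hbounded : Bornology.IsBounded (unitaryGroup n 𝕜 : Set (Matrix n n 𝕜)) :=
    isBounded_iff_forall_norm_le.mpr ⟨1, fun _ ↦ entrywise_sup_norm_bound_of_unitary⟩
  exact isCompact_iff_compactSpace.mp (Metric.isCompact_of_isClosed_isBounded hclosed hbounded)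

/-- A linear map on matrices is unitarily covariant if it commutes with conjugation by every
unitary matrix. -/
def IsUnitarilyCovariant (T : Module.End ℂ (Matrix n n ℂ)) : Prop :=
  ∀ (V : unitaryGroup n ℂ) (X : Matrix n n ℂ),
    T (V * X * (V : Matrix n n ℂ)ᴴ) = V * T X * (V : Matrix n n ℂ)ᴴ

/-- The diagonal unitary with entry `-1` at `i` and `1` elsewhere. -/
def signFlip (i : n) : unitaryGroup n ℂ :=
  ⟨diagonal (Function.update 1 i (-1)), by
    rw [mem_unitaryGroup_iff, star_eq_conjTranspose, diagonal_conjTranspose, diagonal_mul_diagonal,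
      ← diagonal_one]
    congr 1 with j
    obtain rfl | hij := eq_or_ne j i <;> simp [*]⟩

/-- The permutation matrix of `σ` as a unitary matrix. -/
def permUnitary (σ : Equiv.Perm n) : unitaryGroup n ℂ :=
  ⟨σ.permMatrix ℂ, by
    rw [mem_unitaryGroup_iff, star_eq_conjTranspose, conjTranspose_permMatrix, ← permMatrix_mul,
      inv_mul_cancel, permMatrix_one]⟩

theorem signFlip_conj_diagonal (i : n) (f : n → ℂ) :
    (signFlip i : Matrix n n ℂ) * diagonal f * (signFlip i : Matrix n n ℂ)ᴴ = diagonal f := by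
  rw [signFlip, diagonal_conjTranspose, diagonal_mul_diagonal, diagonal_mul_diagonal]
  congr 1 with k
  obtain rfl | hk := eq_or_ne k i <;> simp [*]

theorem signFlip_conj_apply_of_ne {i j : n} (hij : i ≠ j) (X : Matrix n n ℂ) :
    ((signFlip i : Matrix n n ℂ) * X * (signFlip i : Matrix n n ℂ)ᴴ) i j = -X i j := by
  rw [signFlip, diagonal_conjTranspose, mul_diagonal, diagonal_mul]
  simp [hij.symm]

theorem permUnitary_conj (σ : Equiv.Perm n) (X : Matrix n n ℂ) :
    (permUnitary σ : Matrix n n ℂ) * X * (permUnitary σ : Matrix n n ℂ)ᴴ = X.submatrix σ σ := by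
  rw [permUnitary, conjTranspose_permMatrix]
  simp only [Equiv.Perm.permMatrix, PEquiv.toMatrix_toPEquiv_mul, PEquiv.mul_toMatrix_toPEquiv]
  rfl

namespace IsUnitarilyCovariant

variable {S T : Module.End ℂ (Matrix n n ℂ)}

theorem apply_diagonal_of_ne (hT : IsUnitarilyCovariant T) (f : n → ℂ) {i j : n} (hij : i ≠ j) :
    T (diagonal f) i j = 0 := by
  have h := congr_fun₂ (hT (signFlip i) (diagonal f)) i j
  rw [signFlip_conj_diagonal, signFlip_conj_apply_of_ne hij] at h
  exact self_eq_neg.mp h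

theorem apply_single_perm (hT : IsUnitarilyCovariant T) (σ : Equiv.Perm n) (k i : n) :
    T (single (σ k) (σ k) 1) (σ i) (σ i) = T (single k k 1) i i := by
  have h := hT (permUnitary σ) (single (σ k) (σ k) 1)
  rw [permUnitary_conj, permUnitary_conj, submatrix_single_equiv] at h
  simpa using congr_fun₂ h.symm i i

theorem exists_apply_single [Nontrivial n] (hT : IsUnitarilyCovariant T) :
    ∃ a b : ℂ, ∀ k, T (single k k 1) = a • single k k 1 + b • 1 := by
  obtain ⟨k₀, i₀, hne⟩ := exists_pair_ne n
  have htrans {a b c e : n} : a ≠ b → c ≠ e → ∃ σ : Equiv.Perm n, σ a = c ∧ σ b = e :=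
    MulAction.is_two_pretransitive_iff.mp (Equiv.Perm.isMultiplyPretransitive n 2)
  have hoff {k i : n} (hki : k ≠ i) : T (single k k 1) i i = T (single k₀ k₀ 1) i₀ i₀ := by
    obtain ⟨σ, rfl, rfl⟩ := htrans hne hki
    exact hT.apply_single_perm σ k₀ i₀
  have hon (k : n) : T (single k k 1) k k = T (single k₀ k₀ 1) k₀ k₀ := by
    simpa using hT.apply_single_perm (Equiv.swap k₀ k) k₀ k₀
  refine ⟨T (single k₀ k₀ 1) k₀ k₀ - T (single k₀ k₀ 1) i₀ i₀,
    T (single k₀ k₀ 1) i₀ i₀, fun k ↦ ?_⟩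
  ext i j
  obtain rfl | hij := eq_or_ne i j
  · obtain rfl | hki := eq_or_ne k i
    · simp [hon]
    · simp [hoff hki, hki]
  · simp [← diagonal_single, hT.apply_diagonal_of_ne _ hij, hij]

theorem ext (hS : IsUnitarilyCovariant S) (hT : IsUnitarilyCovariant T)
    (hST : ∀ k, S (single k k 1) = T (single k k 1)) : S = T := by
  have hdiag (f : n → ℂ) : S (diagonal f) = T (diagonal f) := by
    rw [← sum_single_eq_diagonal, map_sum, map_sum]
    refine Finset.sum_congr rfl fun k _ ↦ ?_
    rw [← mul_one (f k), ← smul_eq_mul, ← smul_single, map_smul, map_smul, hST]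
  refine LinearMap.ext_on span_selfAdjoint fun X hX ↦ ?_
  have hX : X.IsHermitian := hX
  rw [hX.spectral_theorem, Unitary.conjStarAlgAut_apply]
  exact (hS _ _).trans (hdiag _ ▸ (hT _ _).symm)

end IsUnitarilyCovariant

/-- The map `X ↦ a X + b tr(X) 1`, which is a depolarizing channel when it is completely positive
and trace preserving; the coefficients are arbitrary complex numbers. -/
def depolarizing (a b : ℂ) : Module.End ℂ (Matrix n n ℂ) :=
  a • 1 + b • (traceLinearMap n ℂ ℂ).smulRight 1

theorem depolarizing_apply (a b : ℂ) (X : Matrix n n ℂ) :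
    depolarizing a b X = a • X + b • X.trace • 1 := rfl

theorem linearMap_trace_depolarizing (a b : ℂ) :
    LinearMap.trace ℂ (Matrix n n ℂ) (depolarizing a b) =
      a * Fintype.card n ^ 2 + b * Fintype.card n := by
  simp [depolarizing, LinearMap.trace_smulRight, Module.finrank_matrix, sq]

theorem trace_depolarizing_one (a b : ℂ) :
    (depolarizing a b (1 : Matrix n n ℂ)).trace =
      a * Fintype.card n + b * Fintype.card n ^ 2 := by
  simp [depolarizing_apply, sq]

theorem trace_unitary_conj (V : unitaryGroup n ℂ) (X : Matrix n n ℂ) :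
    (V * X * (V : Matrix n n ℂ)ᴴ).trace = X.trace := by
  rw [trace_mul_cycle, ← star_eq_conjTranspose, Unitary.coe_star_mul_self, one_mul]

theorem isUnitarilyCovariant_depolarizing (a b : ℂ) :
    IsUnitarilyCovariant (depolarizing a b : Module.End ℂ (Matrix n n ℂ)) := by
  intro V X
  have hV : (V : Matrix n n ℂ) * (V : Matrix n n ℂ)ᴴ = 1 := Unitary.coe_mul_star_self V
  simp [depolarizing_apply, mul_add, add_mul, trace_unitary_conj, hV]

theorem IsUnitarilyCovariant.exists_eq_depolarizing [Nontrivial n]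
    {T : Module.End ℂ (Matrix n n ℂ)} (hT : IsUnitarilyCovariant T) :
    ∃ a b : ℂ, T = depolarizing a b := by
  obtain ⟨a, b, hab⟩ := hT.exists_apply_single
  exact ⟨a, b, hT.ext (isUnitarilyCovariant_depolarizing a b) fun k ↦ by
    simp [hab, depolarizing_apply]⟩

theorem IsUnitarilyCovariant.eq_depolarizing [Nontrivial n] {T : Module.End ℂ (Matrix n n ℂ)}
    (hT : IsUnitarilyCovariant T) {q t : ℂ} (ht : t = (T 1).trace / Fintype.card n)
    (hq : q = (LinearMap.trace ℂ _ T - t) / ((Fintype.card n : ℂ) ^ 2 - 1)) :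
    T = depolarizing q ((t - q) / Fintype.card n) := by
  obtain ⟨a, b, rfl⟩ := hT.exists_eq_depolarizing
  have hcard : (Fintype.card n : ℂ) ≠ 0 := Nat.cast_ne_zero.mpr Fintype.card_ne_zero
  have hcard_sq : (Fintype.card n : ℂ) ^ 2 - 1 ≠ 0 := sub_ne_zero.mpr <| mod_cast
    (Nat.one_lt_pow two_ne_zero Fintype.one_lt_card).ne'
  have ht' : t = a + b * Fintype.card n := by
    rw [ht, trace_depolarizing_one]
    field_simp
  have hq' : q = a := by
    rw [hq, linearMap_trace_depolarizing, ht']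
    field_simp
    ring
  rw [hq', ht', add_sub_cancel_left, mul_div_cancel_right₀ b hcard]

/-- The conjugate `X ↦ Uᴴ Φ(U X Uᴴ) U` of a linear map on matrices by a unitary matrix. -/
def unitaryConj (Φ : Module.End ℂ (Matrix n n ℂ)) (U : unitaryGroup n ℂ) :
    Module.End ℂ (Matrix n n ℂ) :=
  (Unitary.conjStarAlgAut ℂ (Matrix n n ℂ) U).toAlgEquiv.toLinearEquiv.symm.conj Φ

section UnitaryConj

variable (Φ : Module.End ℂ (Matrix n n ℂ)) (U : unitaryGroup n ℂ) (X : Matrix n n ℂ)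

theorem unitaryConj_apply :
    unitaryConj Φ U X = (U : Matrix n n ℂ)ᴴ * Φ (U * X * (U : Matrix n n ℂ)ᴴ) * U := rfl

theorem linearMap_trace_unitaryConj :
    LinearMap.trace ℂ _ (unitaryConj Φ U) = LinearMap.trace ℂ _ Φ :=
  LinearMap.trace_conj' Φ _

theorem trace_unitaryConj_one : (unitaryConj Φ U 1).trace = (Φ 1).trace := by
  have hU : (U : Matrix n n ℂ) * (U : Matrix n n ℂ)ᴴ = 1 := Unitary.coe_mul_star_self U
  rw [unitaryConj_apply, mul_one, hU, trace_mul_cycle, hU, one_mul]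

theorem unitaryConj_apply_conj (V : unitaryGroup n ℂ) :
    unitaryConj Φ U (V * X * (V : Matrix n n ℂ)ᴴ) =
      V * unitaryConj Φ (U * V) X * (V : Matrix n n ℂ)ᴴ := by
  have hV : (V : Matrix n n ℂ) * (V : Matrix n n ℂ)ᴴ = 1 := Unitary.coe_mul_star_self V
  simp [unitaryConj_apply, mul_assoc, hV, ← mul_assoc (V : Matrix n n ℂ) (V : Matrix n n ℂ)ᴴ]

theorem continuous_unitaryConj_apply : Continuous fun U ↦ unitaryConj Φ U X := by
  have hΦ : Continuous Φ := Φ.continuous_of_finiteDimensional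
  simp only [unitaryConj_apply]
  fun_prop

end UnitaryConj

section FiniteMeasure

variable (μ : Measure (unitaryGroup n ℂ)) [IsFiniteMeasure μ] (Φ : Module.End ℂ (Matrix n n ℂ))

theorem integrable_unitaryConj_apply (X : Matrix n n ℂ) (i j : n) :
    Integrable (fun U ↦ unitaryConj Φ U X i j) μ :=
  ((continuous_unitaryConj_apply Φ X).matrix_elem i j).integrable_of_hasCompactSupport
    (.of_compactSpace _)

/-- The twirl of `Φ`: the `μ`-average of its conjugates by unitary matrices. The integral is taken
entrywise, so that no norm on matrices is involved. -/
noncomputable def twirl : Module.End ℂ (Matrix n n ℂ) where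
  toFun X := of fun i j ↦ ∫ U, unitaryConj Φ U X i j ∂μ
  map_add' X Y := by
    ext i j
    simp only [map_add, Matrix.add_apply, of_apply]
    exact integral_add (integrable_unitaryConj_apply μ Φ X i j)
      (integrable_unitaryConj_apply μ Φ Y i j)
  map_smul' c X := by
    ext i j
    simp [integral_const_mul]

theorem map_twirl_apply (L : Matrix n n ℂ →ₗ[ℂ] ℂ) (X : Matrix n n ℂ) :
    L (twirl μ Φ X) = ∫ U, L (unitaryConj Φ U X) ∂μ := by
  have hL (A : Matrix n n ℂ) : L A = ∑ i, ∑ j, A i j * L (single i j 1) := by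
    conv_lhs => rw [matrix_eq_sum_single A]
    simp only [map_sum, ← smul_eq_mul (a := A _ _), ← map_smul, smul_single]
    simp only [smul_eq_mul, mul_one]
  have hint (i j : n) : Integrable (fun U ↦ unitaryConj Φ U X i j * L (single i j 1)) μ :=
    (integrable_unitaryConj_apply μ Φ X i j).mul_const _
  simp_rw [hL (unitaryConj Φ _ X)]
  rw [hL, integral_finsetSum _ fun i _ ↦ integrable_finsetSum _ fun j _ ↦ hint i j]
  simp_rw [integral_finsetSum _ fun j _ ↦ hint _ j, integral_mul_const]
  rfl

theorem isUnitarilyCovariant_twirl [μ.IsMulRightInvariant] : IsUnitarilyCovariant (twirl μ Φ) := by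
  intro V X
  ext i j
  let L : Matrix n n ℂ →ₗ[ℂ] ℂ :=
    entryLinearMap ℂ ℂ i j ∘ₗ LinearMap.mulLeftRight ℂ ((V : Matrix n n ℂ), (V : Matrix n n ℂ)ᴴ)
  calc twirl μ Φ (V * X * (V : Matrix n n ℂ)ᴴ) i j
      = ∫ U, unitaryConj Φ U (V * X * (V : Matrix n n ℂ)ᴴ) i j ∂μ := rfl
    _ = ∫ U, L (unitaryConj Φ (U * V) X) ∂μ := by
        simp only [unitaryConj_apply_conj]
        rfl
    _ = ∫ U, L (unitaryConj Φ U X) ∂μ :=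
        integral_mul_right_eq_self (fun U ↦ L (unitaryConj Φ U X)) V
    _ = L (twirl μ Φ X) := (map_twirl_apply μ Φ L X).symm

end FiniteMeasure

section ProbabilityMeasure

variable (μ : Measure (unitaryGroup n ℂ)) [IsProbabilityMeasure μ]
  (Φ : Module.End ℂ (Matrix n n ℂ))

theorem trace_twirl_one : (twirl μ Φ 1).trace = (Φ 1).trace := by
  have h := map_twirl_apply μ Φ (traceLinearMap n ℂ ℂ) 1
  simpa [trace_unitaryConj_one] using h

theorem linearMap_trace_twirl : LinearMap.trace ℂ _ (twirl μ Φ) = LinearMap.trace ℂ _ Φ := by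
  have hint (i j : n) := integrable_unitaryConj_apply μ Φ (single i j 1) i j
  calc LinearMap.trace ℂ _ (twirl μ Φ)
      = ∑ i, ∑ j, ∫ U, unitaryConj Φ U (single i j 1) i j ∂μ := linearMap_trace_eq_sum_single _
    _ = ∫ U, ∑ i, ∑ j, unitaryConj Φ U (single i j 1) i j ∂μ := by
        rw [integral_finsetSum _ fun i _ ↦ integrable_finsetSum _ fun j _ ↦ hint i j]
        simp_rw [integral_finsetSum _ fun j _ ↦ hint _ j]
    _ = LinearMap.trace ℂ _ Φ := by
        simp_rw [← linearMap_trace_eq_sum_single, linearMap_trace_unitaryConj, integral_const,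
          probReal_univ, one_smul]

variable [μ.IsHaarMeasure] [Nontrivial n] {q t : ℂ}

theorem twirl_eq_depolarizing (ht : t = (Φ 1).trace / Fintype.card n)
    (hq : q = (LinearMap.trace ℂ _ Φ - t) / ((Fintype.card n : ℂ) ^ 2 - 1)) :
    twirl μ Φ = depolarizing q ((t - q) / Fintype.card n) := by
  have := isMulRightInvariant_of_isProbabilityMeasure μ
  rw [← trace_twirl_one μ] at ht
  rw [← linearMap_trace_twirl μ] at hq
  exact (isUnitarilyCovariant_twirl μ Φ).eq_depolarizing ht hq

theorem integral_trace_mul_unitaryConj (ht : t = (Φ 1).trace / Fintype.card n)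
    (hq : q = (LinearMap.trace ℂ _ Φ - t) / ((Fintype.card n : ℂ) ^ 2 - 1))
    (X Y : Matrix n n ℂ) :
    ∫ U, (X * unitaryConj Φ U Y).trace ∂μ =
      q * (X * Y).trace + (t - q) * (X.trace * Y.trace) / Fintype.card n := by
  calc ∫ U, (X * unitaryConj Φ U Y).trace ∂μ
      = (X * twirl μ Φ Y).trace :=
        (map_twirl_apply μ Φ (traceLinearMap n ℂ ℂ ∘ₗ LinearMap.mulLeft ℂ X) Y).symm
    _ = q * (X * Y).trace + (t - q) * (X.trace * Y.trace) / Fintype.card n := by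
        rw [twirl_eq_depolarizing μ Φ ht hq, depolarizing_apply]
        simp only [mul_add, Matrix.mul_smul, mul_one, trace_add, trace_smul, smul_eq_mul]
        ring

end ProbabilityMeasure

end Twirl

section Kraus

variable {n ι : Type*} [Fintype n] [Fintype ι] (K : ι → Matrix n n ℂ)

/-- The linear map `X ↦ ∑ i, Kᵢ X Kᵢᴴ` with Kraus matrices `K`. -/
def krausMap : Module.End ℂ (Matrix n n ℂ) :=
  ∑ i, LinearMap.mulLeftRight ℂ (K i, (K i)ᴴ)

theorem krausMap_apply (X : Matrix n n ℂ) : krausMap K X = ∑ i, K i * X * (K i)ᴴ := by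
  simp only [krausMap, LinearMap.sum_apply, LinearMap.mulLeftRight_apply]

theorem linearMap_trace_krausMap :
    LinearMap.trace ℂ _ (krausMap K) = ∑ i, (‖(K i).trace‖ : ℂ) ^ 2 := by
  simp only [krausMap, map_sum, linearMap_trace_mulLeftRight, trace_conjTranspose]
  exact Finset.sum_congr rfl fun i _ ↦ Complex.mul_conj' _

theorem trace_krausMap_apply (X : Matrix n n ℂ) :
    (krausMap K X).trace = ((∑ i, (K i)ᴴ * K i) * X).trace := by
  simp only [krausMap_apply, trace_sum, Finset.sum_mul, trace_mul_cycle (K _)]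

theorem haar_average_acceptance_general [DecidableEq n] [Nontrivial n]
    (μ : Measure (unitaryGroup n ℂ)) [μ.IsHaarMeasure] [IsProbabilityMeasure μ]
    (hK : ∑ i, (K i)ᴴ * K i = 1) {q : ℂ}
    (hq : q = (∑ i, (‖(K i).trace‖ : ℂ) ^ 2 - 1) / ((Fintype.card n : ℂ) ^ 2 - 1))
    (X Y : Matrix n n ℂ) :
    ∫ U, (X * ((U : Matrix n n ℂ)ᴴ * (∑ i, K i * (U * Y * (U : Matrix n n ℂ)ᴴ) * (K i)ᴴ) *
        U)).trace ∂μ =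
      q * (X * Y).trace + (1 - q) * (X.trace * Y.trace) / Fintype.card n := by
  have ht : 1 = (krausMap K 1).trace / Fintype.card n := by
    rw [trace_krausMap_apply, hK, mul_one, trace_one,
      div_self (Nat.cast_ne_zero.mpr Fintype.card_ne_zero)]
  rw [← linearMap_trace_krausMap] at hq
  simp_rw [← krausMap_apply]
  exact integral_trace_mul_unitaryConj μ (krausMap K) ht hq X Y

end Kraus

/-- **Haar-average of the tag-verification acceptance probability (PQAS authentication).**
For a Kraus channel `Γ` with `q = (Σᵢ |tr Kᵢ|² − 1)/(d² − 1)`, an orthogonal projection `P`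
of rank `s`, and a density matrix `ρ` supported inside the range of `P`:
`∫ tr(P · Uᴴ Γ(U ρ Uᴴ) U) dμ(U) = q + (1 − q)·s/d`. -/
theorem haar_average_acceptance (d : ℕ) (hd : 2 ≤ d)
    (μ : Measure (Matrix.unitaryGroup (Fin d) ℂ))
    [μ.IsHaarMeasure] [IsProbabilityMeasure μ]
    (r : ℕ) (K : Fin r → Matrix (Fin d) (Fin d) ℂ)
    (hK : ∑ i, (K i)ᴴ * K i = 1)
    (q : ℝ) (hq : q = ((∑ i, ‖(K i).trace‖ ^ 2) - 1) / ((d : ℝ) ^ 2 - 1))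
    (P : Matrix (Fin d) (Fin d) ℂ) (hP1 : P * P = P) (hP2 : Pᴴ = P)
    (s : ℕ) (hs : P.trace = (s : ℂ))
    (ρ : Matrix (Fin d) (Fin d) ℂ) (hρ : ρ.PosSemidef) (hρtr : ρ.trace = 1)
    (hsupp : P * ρ * P = ρ) :
    (∫ U, (P * ((U : Matrix (Fin d) (Fin d) ℂ)ᴴ *
        (∑ i, K i * ((U : Matrix (Fin d) (Fin d) ℂ) * ρ *
          (U : Matrix (Fin d) (Fin d) ℂ)ᴴ) * (K i)ᴴ) *
        (U : Matrix (Fin d) (Fin d) ℂ))).trace ∂μ)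
      = ((q + (1 - q) * (s : ℝ) / (d : ℝ) : ℝ) : ℂ) := by
  have : Nontrivial (Fin d) := Fin.nontrivial_iff_two_le.mpr hd
  have hPρ : P * ρ = ρ := by rw [← hsupp, ← mul_assoc, ← mul_assoc, hP1]
  rw [haar_average_acceptance_general K μ hK (q := q) (by simp [hq]) P ρ, hPρ, hρtr, hs]
  simp
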